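/- A gentle quiver 𝚫 is of tree type if and only if f_𝚫 = [p+2, p] for some p ∈ ℕ. -/

import Mathlib

/-! Common formalization infrastructure for gentle quivers (Bobinski–Buan,
    "Derived equivalence classification of gentle cluster tilted algebras"). -/

/-- A (finite) quiver with (length-two, monomial) relations.  Vertices and
arrows are natural numbers; `V` and `A` are the finite sets of vertices and
arrows, `src`/`tgt` give the start and terminus of each arrow, and `rel` is the
set of relations, a relation `(a, b)` standing for the length-two path
`a·b` (so `src a = tgt b`). -/
structure QuivRel where
  V : Finset ℕ
  A : Finset ℕ
  src : ℕ → ℕ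
  tgt : ℕ → ℕ
  rel : Finset (ℕ × ℕ)

namespace GentleQuiv

/-- Two vertices are adjacent if some arrow joins them (in either direction). -/
def Adj (Q : QuivRel) (x y : ℕ) : Prop :=
  ∃ a ∈ Q.A, (Q.src a = x ∧ Q.tgt a = y) ∨ (Q.src a = y ∧ Q.tgt a = x)

/-- A quiver is connected if any two of its vertices are joined by a walk. -/
def Connected (Q : QuivRel) : Prop :=
  ∀ x ∈ Q.V, ∀ y ∈ Q.V, Relation.ReflTransGen (Adj Q) x y

/-- `l = [α₁, …, αₙ]` is a (nonempty) path in the quiver: consecutive arrows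
compose, i.e. `s αᵢ = t αᵢ₊₁`. -/
def IsPathList (Q : QuivRel) (l : List ℕ) : Prop :=
  l ≠ [] ∧ (∀ a ∈ l, a ∈ Q.A) ∧ l.Chain' (fun a b => Q.src a = Q.tgt b)

/-- The path `l` contains a subpath (two consecutive arrows) lying in `R`. -/
def HasRelSubpath (Q : QuivRel) (l : List ℕ) : Prop :=
  ∃ a b, (a, b) ∈ Q.rel ∧ [a, b] <:+: l

/-- Gentle quiver: connected, relations are composable pairs of arrows, at most
two arrows in/out of every vertex, the usual gentleness conditions on
relations, and a global bound forcing finite dimensionality. -/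
def IsGentle (Q : QuivRel) : Prop :=
  Q.V.Nonempty ∧
  (∀ a ∈ Q.A, Q.src a ∈ Q.V ∧ Q.tgt a ∈ Q.V) ∧
  Connected Q ∧
  (∀ ρ ∈ Q.rel, ρ.1 ∈ Q.A ∧ ρ.2 ∈ Q.A ∧ Q.src ρ.1 = Q.tgt ρ.2) ∧
  (∀ x, (Q.A.filter fun a => Q.src a = x).card ≤ 2) ∧
  (∀ x, (Q.A.filter fun a => Q.tgt a = x).card ≤ 2) ∧
  (∀ a ∈ Q.A, (Q.A.filter fun b => Q.src b = Q.tgt a ∧ (b, a) ∉ Q.rel).card ≤ 1) ∧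
  (∀ a ∈ Q.A, (Q.A.filter fun c => Q.tgt c = Q.src a ∧ (a, c) ∉ Q.rel).card ≤ 1) ∧
  (∀ a ∈ Q.A, (Q.A.filter fun b => (b, a) ∈ Q.rel).card ≤ 1) ∧
  (∀ a ∈ Q.A, (Q.A.filter fun c => (a, c) ∈ Q.rel).card ≤ 1) ∧
  (∃ n : ℕ, ∀ l : List ℕ, IsPathList Q l → l.length = n → HasRelSubpath Q l)

/-- A choice of functions `σ, τ : Δ₁ → {±1}` as in Avella-Alaminos–Geiss. -/
structure SigmaTau (Q : QuivRel) where
  σ : ℕ → ℤ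
  τ : ℕ → ℤ
  σ_pm : ∀ a ∈ Q.A, σ a = 1 ∨ σ a = -1
  τ_pm : ∀ a ∈ Q.A, τ a = 1 ∨ τ a = -1
  σ_src : ∀ a ∈ Q.A, ∀ b ∈ Q.A, a ≠ b → Q.src a = Q.src b → σ a = -σ b
  τ_tgt : ∀ a ∈ Q.A, ∀ b ∈ Q.A, a ≠ b → Q.tgt a = Q.tgt b → τ a = -τ b
  rel_iff : ∀ a ∈ Q.A, ∀ b ∈ Q.A, Q.src a = Q.tgt b → ((a, b) ∈ Q.rel ↔ σ a = τ b)

/-- A thread: either a trivial path/antipath `1_{x,ε}` at a vertex `x` with a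
sign `ε`, or a sequence of arrows of positive length. -/
inductive Thread where
  | triv (x : ℕ) (ε : ℤ) : Thread
  | arrows (l : List ℕ) : Thread
deriving DecidableEq

/-- Source of a thread. -/
def Thread.source (Q : QuivRel) : Thread → ℕ
  | .triv x _ => x
  | .arrows l => Q.src l.getLast!

/-- Target of a thread. -/
def Thread.target (Q : QuivRel) : Thread → ℕ
  | .triv x _ => x
  | .arrows l => Q.tgt l.head!

/-- `σω` (for paths and antipaths alike; `σ 1_{x,ε} = ε = σ 1'_{x,ε}`). -/
def Thread.sigma {Q : QuivRel} (st : SigmaTau Q) : Thread → ℤ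
  | .triv _ ε => ε
  | .arrows l => st.σ l.getLast!

/-- `τω` when `ω` is regarded as a path (`τ 1_{x,ε} = -ε`). -/
def Thread.tauPath {Q : QuivRel} (st : SigmaTau Q) : Thread → ℤ
  | .triv _ ε => -ε
  | .arrows l => st.τ l.head!

/-- `τω` when `ω` is regarded as an antipath (`τ 1'_{x,ε} = ε`). -/
def Thread.tauAnti {Q : QuivRel} (st : SigmaTau Q) : Thread → ℤ
  | .triv _ ε => ε
  | .arrows l => st.τ l.head!

/-- Length of a thread. -/
def Thread.len : Thread → ℕ
  | .triv _ _ => 0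
  | .arrows l => l.length

/-- A path in `𝚫` of positive length (no two consecutive arrows in `R`). -/
def IsPermList (Q : QuivRel) (l : List ℕ) : Prop :=
  IsPathList Q l ∧ l.Chain' (fun a b => (a, b) ∉ Q.rel)

/-- An antipath in `𝚫` of positive length (all consecutive pairs in `R`). -/
def IsAntiList (Q : QuivRel) (l : List ℕ) : Prop :=
  l ≠ [] ∧ (∀ a ∈ l, a ∈ Q.A) ∧ l.Chain' (fun a b => (a, b) ∈ Q.rel)

/-- A thread is a path in `𝚫` (including trivial ones). -/
def IsPathThread (Q : QuivRel) : Thread → Prop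
  | .triv x ε => x ∈ Q.V ∧ (ε = 1 ∨ ε = -1)
  | .arrows l => IsPermList Q l

/-- A thread is an antipath in `𝚫` (including trivial ones). -/
def IsAntiThread (Q : QuivRel) : Thread → Prop
  | .triv x ε => x ∈ Q.V ∧ (ε = 1 ∨ ε = -1)
  | .arrows l => IsAntiList Q l

/-- `w ∈ ℳ`: `w` is a maximal path of `𝚫`. -/
def InM (Q : QuivRel) (st : SigmaTau Q) (w : Thread) : Prop :=
  IsPathThread Q w ∧
  (¬ ∃ a ∈ Q.A, Q.src a = w.target Q ∧ st.σ a = -(w.tauPath st)) ∧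
  (¬ ∃ b ∈ Q.A, Q.tgt b = w.source Q ∧ st.τ b = -(w.sigma st))

/-- `w ∈ 𝒩`: `w` is a maximal antipath of `𝚫`. -/
def InN (Q : QuivRel) (st : SigmaTau Q) (w : Thread) : Prop :=
  IsAntiThread Q w ∧
  (¬ ∃ a ∈ Q.A, Q.src a = w.target Q ∧ st.σ a = w.tauAnti st) ∧
  (¬ ∃ b ∈ Q.A, Q.tgt b = w.source Q ∧ st.τ b = w.sigma st)

/-- The graph of the bijection `Φ = φ ∘ ψ : 𝒩 → 𝒩`:  `PhiRel Q st w w'` holds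
iff `w, w' ∈ 𝒩` and the maximal path `ψ w` (with `s(ψw) = sw`, `σ(ψw) = -σw`)
satisfies `t w' = t (ψ w)` and `τ w' = -τ(ψ w)`, i.e. `w' = φ (ψ w) = Φ w`. -/
def PhiRel (Q : QuivRel) (st : SigmaTau Q) (w w' : Thread) : Prop :=
  InN Q st w ∧ InN Q st w' ∧
  ∃ m : Thread, InM Q st m ∧
    m.source Q = w.source Q ∧ m.sigma st = -(w.sigma st) ∧
    w'.target Q = m.target Q ∧ w'.tauAnti st = -(m.tauPath st)

/-- `O` is an orbit of the `ℤ`-action on `𝒩` induced by `Φ`. -/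
def NOrbit (Q : QuivRel) (st : SigmaTau Q) (O : Set Thread) : Prop :=
  ∃ w, InN Q st w ∧ O = {w' | Relation.EqvGen (PhiRel Q st) w w'}

/-- `p(𝒪) = |𝒪|` for an orbit `𝒪 ∈ 𝒩/ℤ`. -/
noncomputable def pN (O : Set Thread) : ℕ := O.ncard

/-- `q(𝒪) = Σ_{ω ∈ 𝒪} ℓ(ω)` for an orbit `𝒪 ∈ 𝒩/ℤ`. -/
noncomputable def qN (O : Set Thread) : ℕ := ∑ᶠ w ∈ O, Thread.len w

/-- `a ∈ 𝒞`: the arrow `a` occurs in no maximal antipath. -/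
def InC (Q : QuivRel) (st : SigmaTau Q) (a : ℕ) : Prop :=
  a ∈ Q.A ∧ ¬ ∃ l : List ℕ, InN Q st (.arrows l) ∧ a ∈ l

/-- The graph of the bijection `Ψ : 𝒞 → 𝒞`. -/
def PsiRel (Q : QuivRel) (st : SigmaTau Q) (a b : ℕ) : Prop :=
  InC Q st a ∧ InC Q st b ∧ Q.tgt b = Q.src a ∧ st.τ b = st.σ a

/-- `O` is an orbit of the `ℤ`-action on `𝒞` induced by `Ψ`. -/
def COrbit (Q : QuivRel) (st : SigmaTau Q) (O : Set ℕ) : Prop :=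
  ∃ a, InC Q st a ∧ O = {b | Relation.EqvGen (PsiRel Q st) a b}

/-- The Avella-Alaminos–Geiss invariant `f_𝚫 : ℕ² → ℕ`:  `f_𝚫 (p,q)` counts the
orbits `𝒪 ∈ 𝒩/ℤ ⊔ 𝒞/ℤ` with `p(𝒪) = p` and `q(𝒪) = q`. -/
noncomputable def fInv (Q : QuivRel) (st : SigmaTau Q) : ℕ × ℕ → ℕ := fun pq =>
  {O : Set Thread | NOrbit Q st O ∧ pN O = pq.1 ∧ qN O = pq.2}.ncard +
  {O : Set ℕ | COrbit Q st O ∧ pq.1 = 0 ∧ O.ncard = pq.2}.ncard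

/-- `[p, q] : ℕ² → ℕ`, the characteristic function of `{(p, q)}`. -/
def charFn (p q : ℕ) : ℕ × ℕ → ℕ := fun pq => if pq = (p, q) then 1 else 0

/-- Tree type: `|Δ₀| = |Δ₁| + 1`. -/
def TreeType (Q : QuivRel) : Prop := Q.V.card = Q.A.card + 1

/-- Removing a set of arrows (keeping all vertices); relations containing a
removed arrow are discarded. -/
def deleteArrows (Q : QuivRel) (S : Finset ℕ) : QuivRel where
  V := Q.V
  A := Q.A \ S
  src := Q.src
  tgt := Q.tgt
  rel := Q.rel.filter fun ρ => ρ.1 ∉ S ∧ ρ.2 ∉ S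

/-- Branch arrow: removing it disconnects the quiver. -/
def BranchArrow (Q : QuivRel) (a : ℕ) : Prop :=
  a ∈ Q.A ∧ ¬ Connected (deleteArrows Q {a})

/-- Cycle arrow: removing it leaves the quiver connected. -/
def CycleArrow (Q : QuivRel) (a : ℕ) : Prop :=
  a ∈ Q.A ∧ Connected (deleteArrows Q {a})

/-- Branch relation: a relation one of whose arrows is a branch arrow. -/
def BranchRel (Q : QuivRel) (ρ : ℕ × ℕ) : Prop :=
  ρ ∈ Q.rel ∧ (BranchArrow Q ρ.1 ∨ BranchArrow Q ρ.2)

/-- A relation `ρ = (α, β)` is isolated if the antipath `(α, β)` is a maximal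
antipath, i.e. `ρ ∈ 𝒩`. -/
def Isolated (Q : QuivRel) (st : SigmaTau Q) (ρ : ℕ × ℕ) : Prop :=
  ρ ∈ Q.rel ∧ InN Q st (.arrows [ρ.1, ρ.2])

/-- `Q'` is obtained from `Q` by completing the relations from `R₀`, the new
arrow attached to `ρ ∈ R₀` being `γ ρ`. -/
structure IsCompletion (Q : QuivRel) (R0 : Finset (ℕ × ℕ)) (γ : ℕ × ℕ → ℕ)
    (Q' : QuivRel) : Prop where
  subset : R0 ⊆ Q.rel
  fresh : ∀ ρ ∈ R0, γ ρ ∉ Q.A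
  inj : ∀ ρ ∈ R0, ∀ ρ' ∈ R0, γ ρ = γ ρ' → ρ = ρ'
  V_eq : Q'.V = Q.V
  A_eq : Q'.A = Q.A ∪ R0.image γ
  src_old : ∀ a ∈ Q.A, Q'.src a = Q.src a
  tgt_old : ∀ a ∈ Q.A, Q'.tgt a = Q.tgt a
  src_new : ∀ ρ ∈ R0, Q'.src (γ ρ) = Q.tgt ρ.1
  tgt_new : ∀ ρ ∈ R0, Q'.tgt (γ ρ) = Q.src ρ.2
  rel_eq : Q'.rel = Q.rel ∪ R0.image (fun ρ => (γ ρ, ρ.1)) ∪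
      R0.image (fun ρ => (ρ.2, γ ρ))

/-- A 3-cycle: three pairwise distinct arrows forming an oriented cycle. -/
def Is3Cycle (Q : QuivRel) (a0 a1 a2 : ℕ) : Prop :=
  a0 ∈ Q.A ∧ a1 ∈ Q.A ∧ a2 ∈ Q.A ∧ a0 ≠ a1 ∧ a1 ≠ a2 ∧ a0 ≠ a2 ∧
  Q.src a0 = Q.tgt a1 ∧ Q.src a1 = Q.tgt a2 ∧ Q.src a2 = Q.tgt a0

/-- A triangle: a 3-cycle all of whose three compositions are relations. -/
def IsTriangleTriple (Q : QuivRel) (a0 a1 a2 : ℕ) : Prop :=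
  Is3Cycle Q a0 a1 a2 ∧ (a0, a1) ∈ Q.rel ∧ (a1, a2) ∈ Q.rel ∧ (a2, a0) ∈ Q.rel

/-- The (unordered) set of arrows of a triangle. -/
def TriangleSet (Q : QuivRel) (O : Finset ℕ) : Prop :=
  ∃ a0 a1 a2, O = {a0, a1, a2} ∧ IsTriangleTriple Q a0 a1 a2

/-- Branch triangle: removing any two of its arrows disconnects the quiver. -/
def BranchTriangle (Q : QuivRel) (O : Finset ℕ) : Prop :=
  TriangleSet Q O ∧ ∀ S ⊆ O, S.card = 2 → ¬ Connected (deleteArrows Q S)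

/-- Free relation: a relation neither of whose arrows lies in `𝒞`. -/
def FreeRel (Q : QuivRel) (st : SigmaTau Q) (ρ : ℕ × ℕ) : Prop :=
  ρ ∈ Q.rel ∧ ¬ InC Q st ρ.1 ∧ ¬ InC Q st ρ.2

/-- The class `𝒜`: gentle quivers with `f_𝚫 = m·[0,3] + [p+m+2, p]`. -/
def ClassA (Q : QuivRel) (st : SigmaTau Q) : Prop :=
  IsGentle Q ∧ ∃ m p : ℕ, ∀ x, fInv Q st x = m * charFn 0 3 x + charFn (p + m + 2) p x

/-- The class `Ã`: gentle quivers with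
`f_𝚫 = (m₁+m₂)·[0,3] + [p+m₁, p] + [q+m₂, q]`, `p+m₁ > 0`, `q+m₂ > 0`. -/
def ClassAtilde (Q : QuivRel) (st : SigmaTau Q) : Prop :=
  IsGentle Q ∧ ∃ m1 m2 p q : ℕ, 0 < p + m1 ∧ 0 < q + m2 ∧
    ∀ x, fInv Q st x =
      (m1 + m2) * charFn 0 3 x + charFn (p + m1) p x + charFn (q + m2) q x

/-- Isomorphism of quivers with relations. -/
def IsoQR (Q Q' : QuivRel) : Prop :=
  ∃ fV fA : ℕ → ℕ,
    Set.BijOn fV ↑Q.V ↑Q'.V ∧ Set.BijOn fA ↑Q.A ↑Q'.A ∧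
    (∀ a ∈ Q.A, Q'.src (fA a) = fV (Q.src a) ∧ Q'.tgt (fA a) = fV (Q.tgt a)) ∧
    (∀ a ∈ Q.A, ∀ b ∈ Q.A, ((a, b) ∈ Q.rel ↔ (fA a, fA b) ∈ Q'.rel))

/-- The quiver has no loops. -/
def NoLoops (Q : QuivRel) : Prop := ∀ a ∈ Q.A, Q.src a ≠ Q.tgt a

/-- The reflection at `x` is defined: every arrow starting at `x` admits a
(necessarily unique) companion arrow ending at `x` not bound by a relation. -/
def CanReflect (Q : QuivRel) (x : ℕ) : Prop :=
  x ∈ Q.V ∧ ∀ a ∈ Q.A, Q.src a = x → ∃ b ∈ Q.A, Q.tgt b = x ∧ (a, b) ∉ Q.rel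

/-- `Q'` is the reflection of the gentle loop-free quiver `Q` at the vertex
`x`, following Brenner–Butler tilting. -/
def IsReflection (Q : QuivRel) (x : ℕ) (Q' : QuivRel) : Prop :=
  IsGentle Q ∧ NoLoops Q ∧ CanReflect Q x ∧
  Q'.V = Q.V ∧ Q'.A = Q.A ∧
  (∀ a ∈ Q.A, Q.tgt a = x → Q'.src a = x ∧ Q'.tgt a = Q.src a) ∧
  (∀ a ∈ Q.A, Q.src a = x →
    ∀ b ∈ Q.A, Q.tgt b = x → (a, b) ∉ Q.rel → Q'.src a = Q.src b) ∧
  (∀ a ∈ Q.A, Q.tgt a ≠ x → Q.src a ≠ x → Q'.src a = Q.src a) ∧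
  (∀ a ∈ Q.A, Q.tgt a ≠ x →
    ((∃ b ∈ Q.A, Q.tgt b = x ∧ Q.src b = Q.tgt a ∧ (b, a) ∈ Q.rel) → Q'.tgt a = x) ∧
    ((¬ ∃ b ∈ Q.A, Q.tgt b = x ∧ Q.src b = Q.tgt a ∧ (b, a) ∈ Q.rel) →
      Q'.tgt a = Q.tgt a)) ∧
  (∀ a b : ℕ, (a, b) ∈ Q'.rel ↔
    (((a, b) ∈ Q.rel ∧ Q.tgt a ≠ x ∧ Q.src a ≠ x) ∨
     (a ∈ Q.A ∧ b ∈ Q.A ∧ Q.src a = x ∧ Q.tgt b = x ∧ (a, b) ∉ Q.rel) ∨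
     (a ∈ Q.A ∧ b ∈ Q.A ∧ Q.tgt a = x ∧
       ∃ c ∈ Q.A, c ≠ a ∧ Q.tgt c = x ∧ Q.src c = Q.tgt b ∧ (c, b) ∈ Q.rel)))

/-- The opposite quiver with relations. -/
def opQR (Q : QuivRel) : QuivRel where
  V := Q.V
  A := Q.A
  src := Q.tgt
  tgt := Q.src
  rel := Q.rel.image fun ρ => (ρ.2, ρ.1)

/-- Coreflection: the dual of reflection. -/
def IsCoreflection (Q : QuivRel) (x : ℕ) (Q' : QuivRel) : Prop :=
  IsReflection (opQR Q) x (opQR Q')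

/-- One step of reflection equivalence: a reflection, a coreflection, or an
isomorphism of quivers with relations. -/
def RefStep (Q Q' : QuivRel) : Prop :=
  (∃ x, IsReflection Q x Q') ∨ (∃ x, IsCoreflection Q x Q') ∨ IsoQR Q Q'

/-- Reflection equivalence: a finite sequence of reflections/coreflections,
up to isomorphism of quivers with relations. -/
def RefEquiv : QuivRel → QuivRel → Prop := Relation.ReflTransGen RefStep

/-- A cyclic orientation of a `1`-cycle quiver without branch arrows (i.e. a
cycle): enumerations of the vertices and arrows by `ZMod n` such that the
`i`-th arrow joins the `i`-th and `(i+1)`-st vertices. -/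
structure CyclicOrientation (Q : QuivRel) (n : ℕ) where
  ev : ZMod n → ℕ
  ea : ZMod n → ℕ
  ev_mem : ∀ i, ev i ∈ Q.V
  ea_mem : ∀ i, ea i ∈ Q.A
  ev_inj : Function.Injective ev
  ea_inj : Function.Injective ea
  ev_surj : ∀ v ∈ Q.V, ∃ i, ev i = v
  ea_surj : ∀ a ∈ Q.A, ∃ i, ea i = a
  compat : ∀ i : ZMod n,
    (Q.src (ea i) = ev i ∧ Q.tgt (ea i) = ev (i + 1)) ∨
    (Q.src (ea i) = ev (i + 1) ∧ Q.tgt (ea i) = ev i)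

/-- Clockwise arrow with respect to a cyclic orientation. -/
def Clockwise (Q : QuivRel) {n : ℕ} (co : CyclicOrientation Q n) (a : ℕ) : Prop :=
  a ∈ Q.A ∧ ∃ i : ZMod n, co.ea i = a ∧ Q.src a = co.ev i ∧ Q.tgt a = co.ev (i + 1)

/-- Anticlockwise arrow with respect to a cyclic orientation. -/
def Anticlockwise (Q : QuivRel) {n : ℕ} (co : CyclicOrientation Q n) (a : ℕ) : Prop :=
  a ∈ Q.A ∧ ∃ i : ZMod n, co.ea i = a ∧ Q.src a = co.ev (i + 1) ∧ Q.tgt a = co.ev i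

end GentleQuiv

namespace GentleQuiv




section Aux

variable {Q : QuivRel}

/-! ### The state walk -/

abbrev State := ℕ × ℤ × Bool

inductive Step (Q : QuivRel) (st : SigmaTau Q) (T : Finset ℕ) : State → State → Prop
  | fa (a : ℕ) (ha : a ∈ T) : Step Q st T (Q.src a, st.σ a, true) (Q.tgt a, -st.τ a, true)
  | fb (x : ℕ) (e : ℤ) (h : ∀ a ∈ T, Q.src a = x → st.σ a ≠ e) :
      Step Q st T (x, e, true) (x, e, false)
  | ba (a : ℕ) (ha : a ∈ T) : Step Q st T (Q.tgt a, st.τ a, false) (Q.src a, st.σ a, false)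
  | bf (x : ℕ) (e : ℤ) (h : ∀ a ∈ T, Q.tgt a = x → st.τ a ≠ e) :
      Step Q st T (x, e, false) (x, -e, true)

open Relation in
theorem merge_aux {S : Type*} {r r' : S → S → Prop} {X : Set S} {a b : S}
    (hX : ∀ x ∈ X, ∀ z ∈ X, ReflTransGen r x z)
    (cX : ∀ x ∈ X, ∀ z, r x z → z ∈ X) (ha : a ∈ X) (hb : b ∉ X)
    (mono : ∀ u v, r u v → u ≠ a → u ≠ b → r' u v) :
    ∀ x ∈ X, ReflTransGen r' x a := by
  intro x hx
  have h := hX x hx a ha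
  induction h using ReflTransGen.head_induction_on with
  | refl => exact ReflTransGen.refl
  | head h1 h2 ih =>
    rename_i c d
    by_cases hc : c = a
    · subst hc; exact ReflTransGen.refl
    · refine ReflTransGen.head (mono _ _ h1 hc ?_) (ih (cX _ hx _ h1))
      rintro rfl; exact hb hx

open Relation in
theorem merge {S : Type*} {r r' : S → S → Prop} {X Y : Set S} {a b a' b' : S}
    (hX : ∀ x ∈ X, ∀ z ∈ X, ReflTransGen r x z)
    (hY : ∀ x ∈ Y, ∀ z ∈ Y, ReflTransGen r x z)
    (cX : ∀ x ∈ X, ∀ z, r x z → z ∈ X) (cY : ∀ x ∈ Y, ∀ z, r x z → z ∈ Y)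
    (ha : a ∈ X) (hb : b ∈ Y) (ha' : a' ∈ X) (hb' : b' ∈ Y)
    (hd : ∀ x ∈ X, x ∉ Y)
    (mono : ∀ u v, r u v → u ≠ a → u ≠ b → r' u v)
    (ra : ∀ v, r a v → v = a') (rb : ∀ v, r b v → v = b')
    (ra' : r' a b') (rb' : r' b a') :
    ∀ x ∈ X ∪ Y, ∀ z ∈ X ∪ Y, ReflTransGen r' x z := by
  have hbX : b ∉ X := fun h => hd _ h hb
  have haY : a ∉ Y := fun h => hd _ ha h
  have toa := merge_aux hX cX ha hbX mono
  have tob := merge_aux hY cY hb haY (fun u v h h1 h2 => mono u v h h2 h1)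
  have sX : ∀ c ∈ X, ∀ d, r c d → ReflTransGen r' c d := by
    intro c hc d hcd
    by_cases h : c = a
    · subst h
      rw [ra _ hcd]
      exact ((ReflTransGen.single ra').trans (tob _ hb')).trans (.single rb')
    · exact .single (mono _ _ hcd h (by rintro rfl; exact hbX hc))
  have sY : ∀ c ∈ Y, ∀ d, r c d → ReflTransGen r' c d := by
    intro c hc d hcd
    by_cases h : c = b
    · subst h
      rw [rb _ hcd]
      exact ((ReflTransGen.single rb').trans (toa _ ha')).trans (.single ra')
    · exact .single (mono _ _ hcd (by rintro rfl; exact haY hc) h)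
  have gen : ∀ Z : Set S, (∀ x ∈ Z, ∀ z ∈ Z, ReflTransGen r x z) →
      (∀ x ∈ Z, ∀ z, r x z → z ∈ Z) → (∀ c ∈ Z, ∀ d, r c d → ReflTransGen r' c d) →
      ∀ x ∈ Z, ∀ z ∈ Z, ReflTransGen r' x z := by
    intro Z hZ cZ sZ x hx z hz
    have h := hZ x hx z hz
    induction h using ReflTransGen.head_induction_on with
    | refl => exact ReflTransGen.refl
    | head h1 h2 ih => exact (sZ _ hx _ h1).trans (ih (cZ _ hx _ h1))
  have gX := gen X hX cX sX
  have gY := gen Y hY cY sY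
  rintro x (hx | hx) z (hz | hz)
  · exact gX x hx z hz
  · exact ((toa x hx).trans (.single ra')).trans (gY _ hb' z hz)
  · exact ((tob x hx).trans (.single rb')).trans (gX _ ha' z hz)
  · exact gY x hx z hz

/-- States at the vertices of `S`. -/
def St (S : Set ℕ) : Set State := {u | u.1 ∈ S ∧ (u.2.1 = 1 ∨ u.2.1 = -1)}

theorem Step.closed {st : SigmaTau Q} {T : Finset ℕ} (hT : T ⊆ Q.A) {S : Set ℕ}
    (hS : ∀ a ∈ T, (Q.src a ∈ S ↔ Q.tgt a ∈ S)) :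
    ∀ x ∈ St S, ∀ z, Step Q st T x z → z ∈ St S := by
  rintro x ⟨hx, hx'⟩ z h
  cases h with
  | fa a ha =>
    refine ⟨(hS a ha).1 hx, ?_⟩
    have := st.τ_pm a (hT ha)
    simp only; omega
  | fb x e h => exact ⟨hx, hx'⟩
  | ba a ha => exact ⟨(hS a ha).2 hx, st.σ_pm a (hT ha)⟩
  | bf x e h =>
    refine ⟨hx, ?_⟩
    simp only at *; omega

open Relation in
theorem trans_single {st : SigmaTau Q} {T : Finset ℕ} {y : ℕ}
    (hy : ∀ a ∈ T, Q.src a ≠ y ∧ Q.tgt a ≠ y) :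
    ∀ x ∈ St {y}, ∀ z ∈ St {y}, ReflTransGen (Step Q st T) x z := by
  have f : ∀ e, Step Q st T (y, e, true) (y, e, false) :=
    fun e => Step.fb _ _ (fun a ha h => absurd h (hy a ha).1)
  have g : ∀ e, Step Q st T (y, e, false) (y, -e, true) :=
    fun e => Step.bf _ _ (fun a ha h => absurd h (hy a ha).2)
  have g' : Step Q st T (y, -1, false) (y, 1, true) := by simpa using g (-1)
  have r1 : ∀ u ∈ St {y}, ReflTransGen (Step Q st T) u (y, 1, true) := by
    rintro ⟨x, e, b⟩ ⟨hx, he⟩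
    simp only [Set.mem_singleton_iff] at hx he
    subst hx
    have h3 : ReflTransGen (Step Q st T) (x, -1, false) (x, 1, true) := .single g'
    have h2 := ReflTransGen.head (f (-1)) h3
    have h1 := ReflTransGen.head (g 1) h2
    have h0 := ReflTransGen.head (f 1) h1
    rcases he with rfl | rfl <;> cases b <;> assumption
  have r2 : ∀ u ∈ St {y}, ReflTransGen (Step Q st T) (y, 1, true) u := by
    rintro ⟨x, e, b⟩ ⟨hx, he⟩
    simp only [Set.mem_singleton_iff] at hx he
    subst hx
    have h0 : ReflTransGen (Step Q st T) (x, 1, true) (x, 1, true) := .refl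
    have h1 := h0.tail (f 1)
    have h2 := h1.tail (g 1)
    have h3 := h2.tail (f (-1))
    rcases he with rfl | rfl <;> cases b <;> assumption
  exact fun x hx z hz => (r1 x hx).trans (r2 z hz)

theorem Step.mono_insert {st : SigmaTau Q} {T : Finset ℕ} {α : ℕ} (u v : State)
    (h : Step Q st T u v) (h1 : u ≠ (Q.src α, st.σ α, true))
    (h2 : u ≠ (Q.tgt α, st.τ α, false)) : Step Q st (insert α T) u v := by
  cases h with
  | fa a ha => exact .fa a (Finset.mem_insert_of_mem ha)
  | ba a ha => exact .ba a (Finset.mem_insert_of_mem ha)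
  | fb x e h =>
    refine .fb _ _ fun a ha hs hσ => ?_
    rcases Finset.mem_insert.1 ha with rfl | ha
    · exact h1 (by rw [hs, hσ])
    · exact h a ha hs hσ
  | bf x e h =>
    refine .bf _ _ fun a ha hs hσ => ?_
    rcases Finset.mem_insert.1 ha with rfl | ha
    · exact h2 (by rw [hs, hσ])
    · exact h a ha hs hσ

theorem sig_inj (st : SigmaTau Q) {a b : ℕ} (ha : a ∈ Q.A) (hb : b ∈ Q.A)
    (h : Q.src a = Q.src b) (h' : st.σ a = st.σ b) : a = b := by
  by_contra hne
  have := st.σ_src a ha b hb hne h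
  have := st.σ_pm a ha
  omega

theorem tau_inj (st : SigmaTau Q) {a b : ℕ} (ha : a ∈ Q.A) (hb : b ∈ Q.A)
    (h : Q.tgt a = Q.tgt b) (h' : st.τ a = st.τ b) : a = b := by
  by_contra hne
  have := st.τ_tgt a ha b hb hne h
  have := st.τ_pm a ha
  omega

theorem step_a {st : SigmaTau Q} {T : Finset ℕ} (hT : T ⊆ Q.A) {α : ℕ} (hα : α ∈ Q.A)
    (hn : α ∉ T) (v : State) (h : Step Q st T (Q.src α, st.σ α, true) v) :
    v = (Q.src α, st.σ α, false) := by
  generalize hu : (Q.src α, st.σ α, true) = u at h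
  cases h with
  | fa a ha =>
    simp only [Prod.mk.injEq, and_true] at hu
    exact absurd (sig_inj st hα (hT ha) hu.1 hu.2) (by rintro rfl; exact hn ha)
  | fb x e h => simp only [Prod.mk.injEq, and_true] at hu; rw [hu.1, hu.2]
  | ba a ha => simp at hu
  | bf x e h => simp at hu

theorem step_b {st : SigmaTau Q} {T : Finset ℕ} (hT : T ⊆ Q.A) {α : ℕ} (hα : α ∈ Q.A)
    (hn : α ∉ T) (v : State) (h : Step Q st T (Q.tgt α, st.τ α, false) v) :
    v = (Q.tgt α, -st.τ α, true) := by
  generalize hu : (Q.tgt α, st.τ α, false) = u at h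
  cases h with
  | ba a ha =>
    simp only [Prod.mk.injEq, and_true] at hu
    exact absurd (tau_inj st hα (hT ha) hu.1 hu.2) (by rintro rfl; exact hn ha)
  | bf x e h => simp only [Prod.mk.injEq, and_true] at hu; rw [hu.1, hu.2]
  | fa a ha => simp at hu
  | fb x e h => simp at hu

theorem crossing (hQ : IsGentle Q) {S : Finset ℕ} (hne : S.Nonempty) (hS : S ⊆ Q.V)
    (hSV : S ≠ Q.V) :
    ∃ a ∈ Q.A, (Q.src a ∈ S ∧ Q.tgt a ∉ S) ∨ (Q.src a ∉ S ∧ Q.tgt a ∈ S) := by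
  obtain ⟨x, hx⟩ := hne
  obtain ⟨y, hy, hyS⟩ : ∃ y ∈ Q.V, y ∉ S := by
    by_contra! h
    exact hSV (Finset.Subset.antisymm hS h)
  have hc := hQ.2.2.1 x (hS hx) y hy
  by_contra! h
  apply hyS
  clear hy hyS
  induction hc with
  | refl => exact hx
  | tail h1 h2 ih =>
    obtain ⟨a, ha, ⟨h3, h4⟩ | ⟨h3, h4⟩⟩ := h2
    · have := (h a ha).1; grind
    · have := (h a ha).2; grind

open Relation in
theorem grow (hQ : IsGentle Q) (st : SigmaTau Q) (k : ℕ) (hk : k + 1 ≤ Q.V.card) :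
    ∃ S T : Finset ℕ, S ⊆ Q.V ∧ T ⊆ Q.A ∧ S.card = k + 1 ∧ T.card = k ∧
      (∀ a ∈ T, Q.src a ∈ S ∧ Q.tgt a ∈ S) ∧
      ∀ x ∈ St (S : Set ℕ), ∀ z ∈ St (S : Set ℕ), ReflTransGen (Step Q st T) x z := by
  induction k with
  | zero =>
    obtain ⟨v, hv⟩ := hQ.1
    refine ⟨{v}, ∅, by simpa using hv, by simp, by simp, by simp, by simp, ?_⟩
    have := trans_single (st := st) (T := ∅) (y := v) (by simp)
    simpa using this
  | succ k ih =>
    obtain ⟨S, T, hS, hT, cS, cT, hST, tr⟩ := ih (by omega)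
    obtain ⟨α, hα, hcr⟩ := crossing hQ (S := S) (Finset.card_pos.1 (by omega)) hS
      (by rintro rfl; omega)
    have hαT : α ∉ T := fun h => by have := hST α h; tauto
    have hV := hQ.2.1 α hα
    have hins : ∀ y, y ∉ S → y ∈ Q.V → (Q.src α ∈ insert y S ∧ Q.tgt α ∈ insert y S) →
      (∀ x ∈ St (S : Set ℕ) ∪ St {y}, ∀ z ∈ St (S : Set ℕ) ∪ St {y},
        ReflTransGen (Step Q st (insert α T)) x z) →
      ∃ S T : Finset ℕ, S ⊆ Q.V ∧ T ⊆ Q.A ∧ S.card = k + 1 + 1 ∧ T.card = k + 1 ∧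
      (∀ a ∈ T, Q.src a ∈ S ∧ Q.tgt a ∈ S) ∧
      ∀ x ∈ St (S : Set ℕ), ∀ z ∈ St (S : Set ℕ), ReflTransGen (Step Q st T) x z := by
      intro y hy hyV hαy H
      refine ⟨insert y S, insert α T, Finset.insert_subset hyV hS, Finset.insert_subset hα hT,
        by rw [Finset.card_insert_of_notMem hy, cS],
        by rw [Finset.card_insert_of_notMem hαT, cT], ?_, ?_⟩
      · intro a ha
        rcases Finset.mem_insert.1 ha with rfl | ha
        · exact hαy
        · exact ⟨Finset.mem_insert_of_mem (hST a ha).1, Finset.mem_insert_of_mem (hST a ha).2⟩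
      · have e : St ((insert y S : Finset ℕ) : Set ℕ) = St (S : Set ℕ) ∪ St {y} := by
          ext u; simp only [St, Finset.coe_insert, Set.mem_insert_iff, Set.mem_setOf_eq,
            Set.mem_union, Set.mem_singleton_iff]; tauto
        rw [e]; exact H
    have hout : ∀ y, y ∉ S → ∀ a ∈ T, Q.src a ≠ y ∧ Q.tgt a ≠ y := fun y hy a ha =>
      ⟨by rintro rfl; exact hy (hST a ha).1, by rintro rfl; exact hy (hST a ha).2⟩
    have hcX := Step.closed (st := st) hT (S := (S : Set ℕ)) (fun a ha => by
      have := hST a ha; simp [this.1, this.2])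
    have hcY : ∀ y, y ∉ S → ∀ x ∈ St {y}, ∀ z, Step Q st T x z → z ∈ St {y} := fun y hy =>
      Step.closed hT (fun a ha => by have := hout y hy a ha; simp [this.1, this.2])
    have hd : ∀ y, y ∉ S → ∀ x ∈ St (S : Set ℕ), x ∉ St {y} := by
      rintro y hy x hx hx'
      have h1 := hx.1; have h2 := hx'.1
      simp only [Set.mem_singleton_iff] at h2
      rw [h2] at h1; exact hy h1
    have sp := st.σ_pm α hα
    have tp := st.τ_pm α hα
    have tp' : -st.τ α = 1 ∨ -st.τ α = -1 := by omega
    rcases hcr with ⟨h1, h2⟩ | ⟨h1, h2⟩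
    · refine hins (Q.tgt α) h2 hV.2 (by simp [h1]) ?_
      exact merge (a := (Q.src α, st.σ α, true)) (b := (Q.tgt α, st.τ α, false))
        (a' := (Q.src α, st.σ α, false)) (b' := (Q.tgt α, -st.τ α, true))
        tr (trans_single (hout _ h2)) hcX (hcY _ h2) ⟨h1, sp⟩ ⟨rfl, tp⟩ ⟨h1, sp⟩ ⟨rfl, tp'⟩
        (hd _ h2) Step.mono_insert (step_a hT hα hαT) (step_b hT hα hαT)
        (.fa α (by simp)) (.ba α (by simp))
    · refine hins (Q.src α) h1 hV.1 (by simp [h2]) ?_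
      exact merge (b := (Q.src α, st.σ α, true)) (a := (Q.tgt α, st.τ α, false))
        (b' := (Q.src α, st.σ α, false)) (a' := (Q.tgt α, -st.τ α, true))
        tr (trans_single (hout _ h1)) hcX (hcY _ h1) ⟨h2, tp⟩ ⟨rfl, sp⟩ ⟨h2, tp'⟩ ⟨rfl, sp⟩
        (hd _ h1) (fun u v h h1 h2 => Step.mono_insert u v h h2 h1)
        (step_b hT hα hαT) (step_a hT hα hαT)
        (.ba α (by simp)) (.fa α (by simp))

open Relation in
theorem tree_trans (hQ : IsGentle Q) (st : SigmaTau Q) (ht : TreeType Q) :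
    ∀ x ∈ St (Q.V : Set ℕ), ∀ z ∈ St (Q.V : Set ℕ), ReflTransGen (Step Q st Q.A) x z := by
  unfold TreeType at ht
  obtain ⟨S, T, hS, hT, cS, cT, -, tr⟩ := grow hQ st Q.A.card (by omega)
  have e1 := Finset.eq_of_subset_of_card_le hS (by omega)
  have e2 := Finset.eq_of_subset_of_card_le hT (by omega)
  subst e1
  rw [e2] at tr
  exact tr


/-! ### Antipaths -/

theorem rel_facts (hQ : IsGentle Q) (st : SigmaTau Q) {a b : ℕ} (h : (a, b) ∈ Q.rel) :
    a ∈ Q.A ∧ b ∈ Q.A ∧ Q.src a = Q.tgt b ∧ st.σ a = st.τ b := by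
  have h1 := hQ.2.2.2.1 _ h
  exact ⟨h1.1, h1.2.1, h1.2.2, (st.rel_iff a h1.1 b h1.2.1 h1.2.2).1 h⟩

theorem rel_left (hQ : IsGentle Q) (st : SigmaTau Q) {a b c : ℕ} (h : (a, c) ∈ Q.rel)
    (h' : (b, c) ∈ Q.rel) : a = b := by
  have h1 := rel_facts hQ st h
  have h2 := rel_facts hQ st h'
  exact sig_inj st h1.1 h2.1 (h1.2.2.1.trans h2.2.2.1.symm) (h1.2.2.2.trans h2.2.2.2.symm)

theorem rel_right (hQ : IsGentle Q) (st : SigmaTau Q) {a b c : ℕ} (h : (c, a) ∈ Q.rel)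
    (h' : (c, b) ∈ Q.rel) : a = b := by
  have h1 := rel_facts hQ st h
  have h2 := rel_facts hQ st h'
  exact tau_inj st h1.2.1 h2.2.1 (h1.2.2.1.symm.trans h2.2.2.1) (h1.2.2.2.symm.trans h2.2.2.2)

theorem anti_mid {l r s : List ℕ} {c b : ℕ} (h : IsAntiList Q l) (e : l = r ++ c :: b :: s) :
    (c, b) ∈ Q.rel := by
  have := h.2.2
  rw [e] at this
  have := (List.isChain_append.1 this).2.1
  exact (List.isChain_cons_cons.1 this).1

theorem anti_tail {a : ℕ} {l : List ℕ} (h : IsAntiList Q (a :: l)) (hl : l ≠ []) :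
    IsAntiList Q l :=
  ⟨hl, fun b hb => h.2.1 b (List.mem_cons_of_mem _ hb), List.IsChain.tail h.2.2⟩

theorem anti_drop {r s : List ℕ} (h : IsAntiList Q (r ++ s)) (hl : s ≠ []) :
    IsAntiList Q s :=
  ⟨hl, fun b hb => h.2.1 b (List.mem_append_right _ hb), (List.isChain_append.1 h.2.2).2.1⟩

theorem getLast!_concat (l : List ℕ) (a : ℕ) : (l ++ [a]).getLast! = a :=
  List.getLast!_of_getLast? (by simp)

theorem getLast!_cons2 (a : ℕ) {l : List ℕ} (h : l ≠ []) : (a :: l).getLast! = l.getLast! := by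
  obtain ⟨s, z, rfl⟩ := List.eq_nil_or_concat'  l |>.resolve_left h
  rw [← List.cons_append, getLast!_concat, getLast!_concat]

theorem getLast!_single (a : ℕ) : [a].getLast! = a := getLast!_concat [] a

theorem getLast!_app (r : List ℕ) {l : List ℕ} (h : l ≠ []) :
    (r ++ l).getLast! = l.getLast! := by
  obtain ⟨s, z, rfl⟩ := List.eq_nil_or_concat'  l |>.resolve_left h
  rw [← List.append_assoc, getLast!_concat, getLast!_concat]

theorem getLast!_mem {l : List ℕ} (h : l ≠ []) : l.getLast! ∈ l := by
  obtain ⟨s, z, rfl⟩ := List.eq_nil_or_concat'  l |>.resolve_left h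
  rw [getLast!_concat]; simp

theorem suf (hQ : IsGentle Q) (st : SigmaTau Q) (l1 l2 : List ℕ) (h1 : IsAntiList Q l1)
    (h2 : IsAntiList Q l2) (h : l1.getLast! = l2.getLast!) : l1 <:+ l2 ∨ l2 <:+ l1 := by
  induction l1 with
  | nil => exact absurd rfl h1.1
  | cons a l ih =>
    by_cases hl : l = []
    · subst hl
      left
      rw [getLast!_single] at h
      obtain ⟨s, z, rfl⟩ := List.eq_nil_or_concat' l2 |>.resolve_left h2.1
      rw [getLast!_concat] at h
      subst h
      exact List.suffix_append _ _
    · have h3 := anti_tail h1 hl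
      rw [getLast!_cons2 _ hl] at h
      rcases ih h3 h with ⟨r, hr⟩ | h4
      · rcases List.eq_nil_or_concat' r with rfl | ⟨r', c, rfl⟩
        · right; rw [← hr]; exact List.suffix_cons _ _
        · left
          obtain ⟨b, t, rfl⟩ := List.exists_cons_of_ne_nil hl
          have e1 := anti_mid h2 (r := r') (c := c) (b := b) (s := t) (by rw [← hr]; simp)
          have e2 := anti_mid h1 (r := []) (c := a) (b := b) (s := t) rfl
          have := rel_left hQ st e1 e2
          subst this
          exact ⟨r', by rw [← hr]; simp⟩
      · right; exact h4.trans (List.suffix_cons _ _)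

theorem pre (hQ : IsGentle Q) (st : SigmaTau Q) (a : ℕ) (l1 l2 : List ℕ)
    (h1 : IsAntiList Q (a :: l1)) (h2 : IsAntiList Q (a :: l2)) :
    (a :: l1).getLast! = (a :: l2).getLast! ∨
    (∃ b, (b ∈ l2) ∧ ((a :: l1).getLast!, b) ∈ Q.rel) ∨
    (∃ b, (b ∈ l1) ∧ ((a :: l2).getLast!, b) ∈ Q.rel) := by
  induction l1 generalizing a l2 with
  | nil =>
    cases l2 with
    | nil => left; rfl
    | cons b l =>
      right; left
      exact ⟨b, by simp, by rw [getLast!_single]; exact anti_mid h2 (r := []) rfl⟩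
  | cons c l1 ih =>
    cases l2 with
    | nil =>
      right; right
      exact ⟨c, by simp, by rw [getLast!_single]; exact anti_mid h1 (r := []) rfl⟩
    | cons b l2 =>
      have e1 := anti_mid h1 (r := []) rfl
      have e2 := anti_mid h2 (r := []) rfl
      have := rel_right hQ st e1 e2
      subst this
      rw [getLast!_cons2 a (l := c :: l1) (by simp), getLast!_cons2 a (l := c :: l2) (by simp)]
      rcases ih c l2 (anti_tail h1 (by simp)) (anti_tail h2 (by simp)) with h | ⟨b, hb, h⟩ | ⟨b, hb, h⟩
      · exact Or.inl h
      · exact Or.inr (Or.inl ⟨b, by simp [hb], h⟩)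
      · exact Or.inr (Or.inr ⟨b, by simp [hb], h⟩)

theorem anti_nodup (hQ : IsGentle Q) (st : SigmaTau Q) (l : List ℕ) (h : IsAntiList Q l)
    (hm : ∀ b, (l.getLast!, b) ∉ Q.rel) : l.Nodup := by
  induction l with
  | nil => simp
  | cons a l ih =>
    by_cases hl : l = []
    · subst hl; simp
    · have h3 := anti_tail h hl
      rw [getLast!_cons2 _ hl] at hm
      have nd := ih h3 hm
      refine List.nodup_cons.2 ⟨fun ha => ?_, nd⟩
      obtain ⟨b, t, rfl⟩ := List.exists_cons_of_ne_nil hl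
      have e2 := anti_mid h (r := []) rfl
      obtain ⟨r, s, hrs⟩ := List.append_of_mem ha
      cases s with
      | nil =>
        rw [hrs, getLast!_concat] at hm
        exact hm _ e2
      | cons c s =>
        have e1 := anti_mid h3 hrs
        have := rel_right hQ st e1 e2
        subst this
        cases r with
        | nil =>
          simp only [List.nil_append, List.cons.injEq] at hrs
          obtain ⟨rfl, rfl⟩ := hrs
          simp at nd
        | cons d r =>
          simp only [List.cons_append, List.cons.injEq] at hrs
          obtain ⟨rfl, rfl⟩ := hrs
          simp at nd

theorem anti_tgt_mem {st : SigmaTau Q} (hQ : IsGentle Q) {w : Thread} (h : IsAntiThread Q w) :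
    w.source Q ∈ Q.V ∧ (w.sigma st = 1 ∨ w.sigma st = -1) := by
  cases w with
  | triv x e => exact h
  | arrows l =>
    have := h.2.1 _ (getLast!_mem h.1)
    exact ⟨(hQ.2.1 _ this).1, st.σ_pm _ this⟩

theorem N_no_rel (hQ : IsGentle Q) (st : SigmaTau Q) {l : List ℕ} (h : InN Q st (.arrows l)) :
    ∀ b, (l.getLast!, b) ∉ Q.rel := by
  intro b hb
  have := rel_facts hQ st hb
  exact h.2.2 ⟨b, this.2.1, this.2.2.1.symm, this.2.2.2.symm⟩

theorem N_eq_of_suffix (hQ : IsGentle Q) (st : SigmaTau Q) {l1 l2 : List ℕ}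
    (h1 : InN Q st (.arrows l1)) (h2 : InN Q st (.arrows l2)) (h : l1 <:+ l2) : l1 = l2 := by
  obtain ⟨r, rfl⟩ := h
  rcases List.eq_nil_or_concat' r with rfl | ⟨r', c, rfl⟩
  · simp
  · exfalso
    obtain ⟨b, t, rfl⟩ := List.exists_cons_of_ne_nil h1.1.1
    have e1 := anti_mid h2.1 (r := r') (c := c) (b := b) (s := t) (by simp)
    have := rel_facts hQ st e1
    exact h1.2.1 ⟨c, this.1, by simpa [Thread.target] using this.2.2.1,
      by simpa [Thread.tauAnti] using this.2.2.2⟩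

theorem N_uniq (hQ : IsGentle Q) (st : SigmaTau Q) {w w' : Thread}
    (h : InN Q st w) (h' : InN Q st w') (hs : w.source Q = w'.source Q)
    (hσ : w.sigma st = w'.sigma st) : w = w' := by
  cases w with
  | triv x e =>
    cases w' with
    | triv y f => simp only [Thread.source, Thread.sigma] at hs hσ; rw [hs, hσ]
    | arrows l =>
      exact absurd ⟨_, h'.1.2.1 _ (getLast!_mem h'.1.1), hs.symm, hσ.symm⟩ h.2.1
  | arrows l =>
    cases w' with
    | triv y f =>
      exact absurd ⟨_, h.1.2.1 _ (getLast!_mem h.1.1), hs, hσ⟩ h'.2.1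
    | arrows l' =>
      have e := sig_inj st (h.1.2.1 _ (getLast!_mem h.1.1)) (h'.1.2.1 _ (getLast!_mem h'.1.1)) hs hσ
      rcases suf hQ st l l' h.1 h'.1 e with h3 | h3
      · rw [N_eq_of_suffix hQ st h h' h3]
      · rw [N_eq_of_suffix hQ st h' h h3]

theorem N_uniq_mem (hQ : IsGentle Q) (st : SigmaTau Q) {l l' : List ℕ} {a : ℕ}
    (h : InN Q st (.arrows l)) (h' : InN Q st (.arrows l')) (ha : a ∈ l) (ha' : a ∈ l') :
    l = l' := by
  obtain ⟨r, s, rfl⟩ := List.append_of_mem ha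
  obtain ⟨r', s', rfl⟩ := List.append_of_mem ha'
  have hn := N_no_rel hQ st h
  have hn' := N_no_rel hQ st h'
  have g1 := getLast!_app r (l := a :: s) (by simp)
  have g2 := getLast!_app r' (l := a :: s') (by simp)
  rw [g1] at hn
  rw [g2] at hn'
  have e : (a :: s).getLast! = (a :: s').getLast! := by
    rcases pre hQ st a s s' (anti_drop h.1 (by simp)) (anti_drop h'.1 (by simp)) with
      h | ⟨b, hb, h⟩ | ⟨b, hb, h⟩
    · exact h
    · exact absurd h (hn _)
    · exact absurd h (hn' _)
  have := N_uniq hQ st h h' (by simp only [Thread.source]; rw [g1, g2, e])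
    (by simp only [Thread.sigma]; rw [g1, g2, e])
  simpa using this

theorem N_exists (hQ : IsGentle Q) (st : SigmaTau Q) {x : ℕ} {e : ℤ} (hx : x ∈ Q.V)
    (he : e = 1 ∨ e = -1) (hno : ∀ b ∈ Q.A, Q.tgt b = x → st.τ b ≠ e) :
    ∃ w, InN Q st w ∧ w.source Q = x ∧ w.sigma st = e := by
  by_cases ho : ∃ a ∈ Q.A, Q.src a = x ∧ st.σ a = e
  · obtain ⟨a, ha, hax, hae⟩ := ho
    have key : ∀ n, ∀ l : List ℕ, IsAntiList Q l → l.getLast! = a → Q.A.card ≤ n + l.length →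
        ∃ w, InN Q st w ∧ w.source Q = x ∧ w.sigma st = e := by
      intro n
      induction n with
      | zero =>
        intro l hl hla hc
        by_cases hout : ∃ c ∈ Q.A, Q.src c = Q.tgt l.head! ∧ st.σ c = st.τ l.head!
        · exfalso
          obtain ⟨c, hc', h1, h2⟩ := hout
          obtain ⟨b, t, rfl⟩ := List.exists_cons_of_ne_nil hl.1
          simp only [List.head!_cons] at h1 h2
          have hb := hl.2.1 b (by simp)
          have hr := (st.rel_iff c hc' b hb h1).2 h2
          have hcl : IsAntiList Q (c :: b :: t) :=
            ⟨by simp, by simpa [hc'] using hl.2.1, List.isChain_cons_cons.2 ⟨hr, hl.2.2⟩⟩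
          have nd := anti_nodup hQ st _ hcl (by
            rw [getLast!_cons2 _ (by simp), hla]
            intro d hd
            have := rel_facts hQ st hd
            exact hno d this.2.1 (this.2.2.1.symm.trans hax) (this.2.2.2.symm.trans hae))
          have := Finset.card_le_card (s := (c :: b :: t).toFinset) (t := Q.A) (by
            intro d hd; exact hcl.2.1 d (by simpa using hd))
          rw [List.toFinset_card_of_nodup nd] at this
          simp only [List.length_cons] at this hc
          omega
        · refine ⟨.arrows l, ⟨hl, hout, ?_⟩, by simp only [Thread.source, hla, hax], by
            simp only [Thread.sigma, hla, hae]⟩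
          rintro ⟨b, hb, h1, h2⟩
          simp only [Thread.source, Thread.sigma, hla, hax, hae] at h1 h2
          exact hno b hb h1 h2
      | succ n ih =>
        intro l hl hla hc
        by_cases hout : ∃ c ∈ Q.A, Q.src c = Q.tgt l.head! ∧ st.σ c = st.τ l.head!
        · obtain ⟨c, hc', h1, h2⟩ := hout
          obtain ⟨b, t, rfl⟩ := List.exists_cons_of_ne_nil hl.1
          simp only [List.head!_cons] at h1 h2
          have hb := hl.2.1 b (by simp)
          have hr := (st.rel_iff c hc' b hb h1).2 h2
          have hcl : IsAntiList Q (c :: b :: t) :=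
            ⟨by simp, by simpa [hc'] using hl.2.1, List.isChain_cons_cons.2 ⟨hr, hl.2.2⟩⟩
          refine ih _ hcl (by rw [getLast!_cons2 _ (by simp), hla]) ?_
          simp only [List.length_cons] at hc ⊢
          omega
        · refine ⟨.arrows l, ⟨hl, hout, ?_⟩, by simp only [Thread.source, hla, hax], by
            simp only [Thread.sigma, hla, hae]⟩
          rintro ⟨b, hb, h1, h2⟩
          simp only [Thread.source, Thread.sigma, hla, hax, hae] at h1 h2
          exact hno b hb h1 h2
    exact key Q.A.card [a] ⟨by simp, by simpa using ha, List.isChain_singleton _⟩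
      (getLast!_single a) (by omega)
  · refine ⟨.triv x e, ⟨⟨hx, he⟩, ho, ?_⟩, rfl, rfl⟩
    rintro ⟨b, hb, h1, h2⟩
    exact hno b hb h1 h2

theorem C_pred (hQ : IsGentle Q) (st : SigmaTau Q) {a : ℕ} (h : InC Q st a) :
    ∃ b, InC Q st b ∧ Q.tgt b = Q.src a ∧ st.τ b = st.σ a := by
  by_cases hb : ∃ b ∈ Q.A, Q.tgt b = Q.src a ∧ st.τ b = st.σ a
  · obtain ⟨b, hbA, h1, h2⟩ := hb
    refine ⟨b, ⟨hbA, ?_⟩, h1, h2⟩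
    rintro ⟨l, hl, hbl⟩
    apply h.2
    refine ⟨l, hl, ?_⟩
    obtain ⟨r, s, rfl⟩ := List.append_of_mem hbl
    rcases List.eq_nil_or_concat' r with rfl | ⟨r', c, rfl⟩
    · exact absurd ⟨a, h.1, by simpa [Thread.target] using h1.symm,
        by simpa [Thread.tauAnti] using h2.symm⟩ hl.2.1
    · have e1 := anti_mid hl.1 (r := r') (c := c) (b := b) (s := s) (by simp)
      have := rel_facts hQ st e1
      have : c = a := sig_inj st this.1 h.1 (this.2.2.1.trans h1) (this.2.2.2.trans h2)
      subst this; simp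
  · exfalso
    push Not at hb
    obtain ⟨w, hw, h1, h2⟩ := N_exists hQ st (hQ.2.1 a h.1).1 (st.σ_pm a h.1) hb
    cases w with
    | triv x e => exact hw.2.1 ⟨a, h.1, h1.symm, h2.symm⟩
    | arrows l =>
      have := sig_inj st (hw.1.2.1 _ (getLast!_mem hw.1.1)) h.1 h1 h2
      exact h.2 ⟨l, hw, by rw [← this]; exact getLast!_mem hw.1.1⟩

open Relation in
theorem tree_C_empty (hQ : IsGentle Q) (st : SigmaTau Q) (ht : TreeType Q) (a : ℕ) :
    ¬ InC Q st a := by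
  intro h
  have key : ∀ u v, ReflTransGen (Step Q st Q.A) u v →
      (∃ b, InC Q st b ∧ u = (Q.tgt b, st.τ b, false)) →
      (∃ b, InC Q st b ∧ v = (Q.tgt b, st.τ b, false)) := by
    intro u v huv hu
    induction huv with
    | refl => exact hu
    | tail h1 h2 ih =>
      obtain ⟨b, hb, rfl⟩ := ih
      generalize hs : (Q.tgt b, st.τ b, false) = s at h2
      cases h2 with
      | fa a ha => simp at hs
      | fb x e h => simp at hs
      | ba a ha =>
        simp only [Prod.mk.injEq, and_true] at hs
        have := tau_inj st hb.1 ha hs.1 hs.2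
        subst this
        obtain ⟨c, hc, e1, e2⟩ := C_pred hQ st hb
        exact ⟨c, hc, by rw [e1, e2]⟩
      | bf x e h =>
        simp only [Prod.mk.injEq, and_true] at hs
        exact absurd hs.2 (h b hb.1 hs.1)
  obtain ⟨b, -, hb⟩ := key _ _ (tree_trans hQ st ht (Q.tgt a, st.τ a, false)
    ⟨(hQ.2.1 a h.1).2, st.τ_pm a h.1⟩ (Q.tgt a, st.τ a, true)
    ⟨(hQ.2.1 a h.1).2, st.τ_pm a h.1⟩) ⟨a, h, rfl⟩
  simp at hb

/-! ### The walk computes the orbits -/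

open Relation in
def Inv (Q : QuivRel) (st : SigmaTau Q) (w0 : Thread) (v : State) : Prop :=
  ∃ w', EqvGen (PhiRel Q st) w0 w' ∧ InN Q st w' ∧
    ((v.2.2 = true ∧ ∃ p, IsPathThread Q p ∧ p.source Q = w'.source Q ∧
        p.sigma st = -(w'.sigma st) ∧ p.target Q = v.1 ∧ p.tauPath st = -v.2.1) ∨
     (v.2.2 = false ∧ ∃ m q, InM Q st m ∧ m.source Q = w'.source Q ∧
        m.sigma st = -(w'.sigma st) ∧ IsAntiThread Q q ∧ q.target Q = m.target Q ∧
        q.tauAnti st = -(m.tauPath st) ∧ q.source Q = v.1 ∧ q.sigma st = v.2.1))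

theorem path_tgt_mem {st : SigmaTau Q} (hQ : IsGentle Q) {p : Thread} (h : IsPathThread Q p) :
    p.target Q ∈ Q.V ∧ (-(p.tauPath st) = 1 ∨ -(p.tauPath st) = -1) := by
  cases p with
  | triv x e =>
    obtain ⟨h1, h2⟩ := h
    refine ⟨h1, ?_⟩
    simp only [Thread.tauPath]; omega
  | arrows l =>
    obtain ⟨b, t, rfl⟩ := List.exists_cons_of_ne_nil h.1.1
    have hb := h.1.2.1 b (by simp)
    have := st.τ_pm b hb
    refine ⟨by simpa [Thread.target] using (hQ.2.1 b hb).2, ?_⟩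
    simp only [Thread.tauPath, List.head!_cons]; omega

theorem path_extend {st : SigmaTau Q} {p : Thread} (h : IsPathThread Q p)
    {a : ℕ} (ha : a ∈ Q.A) (h1 : p.target Q = Q.src a) (h2 : p.tauPath st = -st.σ a) :
    ∃ p', IsPathThread Q p' ∧ p'.source Q = p.source Q ∧ p'.sigma st = p.sigma st ∧
      p'.target Q = Q.tgt a ∧ p'.tauPath st = st.τ a := by
  cases p with
  | triv x e =>
    simp only [Thread.target, Thread.tauPath] at h1 h2
    refine ⟨.arrows [a], ⟨⟨by simp, by simpa using ha, List.isChain_singleton _⟩,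
      List.isChain_singleton _⟩, ?_, ?_, by simp [Thread.target], by simp [Thread.tauPath]⟩
    · simp only [Thread.source, getLast!_single, h1]
    · simp only [Thread.sigma, getLast!_single]; omega
  | arrows l =>
    obtain ⟨b, t, rfl⟩ := List.exists_cons_of_ne_nil h.1.1
    have hb := h.1.2.1 b (by simp)
    simp only [Thread.target, Thread.tauPath, List.head!_cons] at h1 h2
    refine ⟨.arrows (a :: b :: t), ⟨⟨by simp, by simpa [ha] using h.1.2.1,
      List.isChain_cons_cons.2 ⟨h1.symm, h.1.2.2⟩⟩,
      List.isChain_cons_cons.2 ⟨?_, h.2⟩⟩, ?_, ?_, by simp [Thread.target],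
      by simp [Thread.tauPath]⟩
    · rw [st.rel_iff a ha b hb h1.symm]
      have := st.σ_pm a ha
      omega
    · simp only [Thread.source]; rw [getLast!_cons2 _ (by simp)]
    · simp only [Thread.sigma]; rw [getLast!_cons2 _ (by simp)]

theorem anti_extend {st : SigmaTau Q} {q : Thread} (h : IsAntiThread Q q)
    {a : ℕ} (ha : a ∈ Q.A) (h1 : q.source Q = Q.tgt a) (h2 : q.sigma st = st.τ a) :
    ∃ q', IsAntiThread Q q' ∧ q'.target Q = q.target Q ∧ q'.tauAnti st = q.tauAnti st ∧
      q'.source Q = Q.src a ∧ q'.sigma st = st.σ a := by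
  cases q with
  | triv x e =>
    simp only [Thread.source, Thread.sigma] at h1 h2
    refine ⟨.arrows [a], ⟨by simp, by simpa using ha, List.isChain_singleton _⟩,
      by simp [Thread.target, h1], by simp [Thread.tauAnti, h2], ?_, ?_⟩
    · simp only [Thread.source, getLast!_single]
    · simp only [Thread.sigma, getLast!_single]
  | arrows l =>
    have hz := h.2.1 _ (getLast!_mem h.1)
    simp only [Thread.source, Thread.sigma] at h1 h2
    have hr := (st.rel_iff _ hz a ha h1).2 h2
    refine ⟨.arrows (l ++ [a]), ⟨by simp, ?_, ?_⟩, ?_, ?_, ?_, ?_⟩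
    · intro b hb
      rcases List.mem_append.1 hb with hb | hb
      · exact h.2.1 b hb
      · simp only [List.mem_singleton] at hb; rw [hb]; exact ha
    · refine List.isChain_append.2 ⟨h.2.2, List.isChain_singleton _, ?_⟩
      intro x hx y hy
      have hx' := List.getLast!_of_getLast? hx
      simp only [List.head?_cons, Option.mem_def, Option.some.injEq] at hy
      rw [← hx', ← hy]; exact hr
    · obtain ⟨b, t, rfl⟩ := List.exists_cons_of_ne_nil h.1
      simp [Thread.target]
    · obtain ⟨b, t, rfl⟩ := List.exists_cons_of_ne_nil h.1
      simp [Thread.tauAnti]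
    · simp only [Thread.source, getLast!_concat]
    · simp only [Thread.sigma, getLast!_concat]

open Relation in
theorem Inv.step (hQ : IsGentle Q) (st : SigmaTau Q) {w0 : Thread} {u v : State}
    (h : Inv Q st w0 u) (hs : Step Q st Q.A u v) : Inv Q st w0 v := by
  obtain ⟨w', he, hN, ⟨hu, p, hp, h1, h2, h3, h4⟩ | ⟨hu, m, q, hm, h1, h2, hq, h3, h4, h5, h6⟩⟩ := h
  · cases hs with
    | ba a ha => simp at hu
    | bf x e h => simp at hu
    | fa a ha =>
      obtain ⟨p', g1, g2, g3, g4, g5⟩ := path_extend hp ha h3 h4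
      exact ⟨w', he, hN, Or.inl ⟨rfl, p', g1, g2.trans h1, g3.trans h2, g4, by simpa using g5⟩⟩
    | fb x e h =>
      simp only at h3 h4
      have hpt := path_tgt_mem (st := st) hQ hp
      rw [h3, h4, neg_neg] at hpt
      refine ⟨w', he, hN, Or.inr ⟨rfl, p, .triv x e, ⟨hp, ?_, ?_⟩, h1, h2, hpt, h3.symm,
        by simp [Thread.tauAnti, h4], rfl, rfl⟩⟩
      · rintro ⟨a, ha, e1, e2⟩
        exact h a ha (e1.trans h3) (by rw [e2, h4, neg_neg])
      · rintro ⟨b, hb, e1, e2⟩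
        exact hN.2.2 ⟨b, hb, e1.trans h1, by rw [e2, h2, neg_neg]⟩
  · cases hs with
    | fa a ha => simp at hu
    | fb x e h => simp at hu
    | ba a ha =>
      obtain ⟨q', g1, g2, g3, g4, g5⟩ := anti_extend hq ha h5 h6
      exact ⟨w', he, hN, Or.inr ⟨rfl, m, q', hm, h1, h2, g1, g2.trans h3, g3.trans h4, g4, g5⟩⟩
    | bf x e h =>
      simp only at h5 h6
      have hqN : InN Q st q := by
        refine ⟨hq, ?_, ?_⟩
        · rintro ⟨a, ha, e1, e2⟩
          exact hm.2.1 ⟨a, ha, e1.trans h3, e2.trans h4⟩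
        · rintro ⟨b, hb, e1, e2⟩
          exact h b hb (e1.trans h5) (e2.trans h6)
      have hqs := anti_tgt_mem (st := st) hQ hq
      rw [h5, h6] at hqs
      refine ⟨q, he.trans _ _ _ (.rel _ _ ⟨hN, hqN, m, hm, h1, h2, h3, h4⟩), hqN,
        Or.inl ⟨rfl, .triv x (-e), ⟨hqs.1, by omega⟩, h5.symm, by rw [h6]; rfl, rfl,
          by simp [Thread.tauPath]⟩⟩

open Relation in
theorem tree_one_orbit (hQ : IsGentle Q) (st : SigmaTau Q) (ht : TreeType Q) {w w' : Thread}
    (hw : InN Q st w) (hw' : InN Q st w') : EqvGen (PhiRel Q st) w w' := by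
  have s1 := anti_tgt_mem (st := st) hQ hw.1
  have s2 := anti_tgt_mem (st := st) hQ hw'.1
  have hr := tree_trans hQ st ht (w.source Q, -(w.sigma st), true) ⟨s1.1, by simp only; omega⟩
    (w'.source Q, -(w'.sigma st), true) ⟨s2.1, by simp only; omega⟩
  have h0 : Inv Q st w (w.source Q, -(w.sigma st), true) :=
    ⟨w, .refl _, hw, Or.inl ⟨rfl, .triv (w.source Q) (-(w.sigma st)), ⟨s1.1, by omega⟩, rfl, rfl,
      rfl, rfl⟩⟩
  have hI : Inv Q st w (w'.source Q, -(w'.sigma st), true) := by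
    generalize (w'.source Q, -(w'.sigma st), true) = z at hr
    induction hr with
    | refl => exact h0
    | tail _ h ih => exact ih.step hQ st h
  obtain ⟨w'', he, hN, ⟨-, p, hp, h1, h2, h3, h4⟩ | ⟨hu, -⟩⟩ := hI
  · cases p with
    | triv x e =>
      change x = _ at h1
      change e = _ at h2
      change x = w'.source Q at h3
      change -e = -(-(w'.sigma st)) at h4
      have := N_uniq hQ st hN hw' (h1.symm.trans h3) (by omega)
      rwa [this] at he
    | arrows l =>
      exfalso
      obtain ⟨b, t, rfl⟩ := List.exists_cons_of_ne_nil hp.1.1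
      simp only [Thread.target, Thread.tauPath, List.head!_cons, neg_neg] at h3 h4
      exact hw'.2.2 ⟨b, hp.1.2.1 b (by simp), h3, h4⟩
  · simp at hu

/-! ### Counting -/

theorem N_image (hQ : IsGentle Q) (st : SigmaTau Q) :
    (fun w : Thread => (w.source Q, w.sigma st)) '' {w | InN Q st w} =
    (((Q.V ×ˢ ({1, -1} : Finset ℤ)) \ Q.A.image (fun a => (Q.tgt a, st.τ a)) :
      Finset (ℕ × ℤ)) : Set (ℕ × ℤ)) := by
  ext ⟨x, e⟩
  simp only [Set.mem_image, Finset.mem_coe, Finset.mem_sdiff, Finset.mem_product,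
    Finset.mem_insert, Finset.mem_singleton, Finset.mem_image, Prod.mk.injEq]
  constructor
  · rintro ⟨w, hw, rfl, rfl⟩
    exact ⟨anti_tgt_mem hQ hw.1, fun ⟨a, ha, h1, h2⟩ => hw.2.2 ⟨a, ha, h1, h2⟩⟩
  · rintro ⟨⟨hx, he⟩, hn⟩
    obtain ⟨w, hw, h1, h2⟩ := N_exists hQ st hx he (fun b hb h1 h2 => hn ⟨b, hb, h1, h2⟩)
    exact ⟨w, hw, h1, h2⟩

theorem N_injOn (hQ : IsGentle Q) (st : SigmaTau Q) :
    Set.InjOn (fun w : Thread => (w.source Q, w.sigma st)) {w | InN Q st w} := by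
  intro w hw w' hw' h
  simp only [Prod.mk.injEq] at h
  exact N_uniq hQ st hw hw' h.1 h.2

theorem N_finite (hQ : IsGentle Q) (st : SigmaTau Q) : {w | InN Q st w}.Finite := by
  apply Set.Finite.of_finite_image _ (N_injOn hQ st)
  rw [N_image hQ st]
  exact Finset.finite_toSet _

theorem N_card (hQ : IsGentle Q) (st : SigmaTau Q) :
    {w | InN Q st w}.ncard + Q.A.card = 2 * Q.V.card := by
  rw [← Set.ncard_image_of_injOn (N_injOn hQ st), N_image hQ st, Set.ncard_coe_finset]
  have hi : (Q.A.image (fun a => (Q.tgt a, st.τ a))).card = Q.A.card := by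
    apply Finset.card_image_of_injOn
    intro a ha b hb h
    simp only [Prod.mk.injEq] at h
    exact tau_inj st ha hb h.1 h.2
  have hsub : Q.A.image (fun a => (Q.tgt a, st.τ a)) ⊆ Q.V ×ˢ ({1, -1} : Finset ℤ) := by
    intro u hu
    obtain ⟨a, ha, rfl⟩ := Finset.mem_image.1 hu
    simp only [Finset.mem_product, Finset.mem_insert, Finset.mem_singleton]
    exact ⟨(hQ.2.1 a ha).2, st.τ_pm a ha⟩
  have := Finset.card_sdiff_add_card_eq_card hsub
  rw [hi, Finset.card_product] at this
  have h2 : ({1, -1} : Finset ℤ).card = 2 := by decide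
  rw [h2] at this
  omega

def Thread.arr : Thread → Finset ℕ
  | .triv _ _ => ∅
  | .arrows l => l.toFinset

theorem N_len (hQ : IsGentle Q) (st : SigmaTau Q) (hC : ∀ a, ¬ InC Q st a) :
    qN {w | InN Q st w} = Q.A.card := by
  classical
  have hf := N_finite hQ st
  unfold qN
  rw [finsum_mem_eq_finite_toFinset_sum _ hf]
  have hl : ∀ w ∈ hf.toFinset, Thread.len w = w.arr.card := by
    intro w hw
    have hw : InN Q st w := by simpa using hw
    cases w with
    | triv x e => rfl
    | arrows l =>
      simp only [Thread.len, Thread.arr]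
      rw [List.toFinset_card_of_nodup (anti_nodup hQ st l hw.1 (N_no_rel hQ st hw))]
  rw [Finset.sum_congr rfl hl, ← Finset.card_biUnion]
  · congr 1
    ext a
    simp only [Finset.mem_biUnion, Set.Finite.mem_toFinset]
    constructor
    · rintro ⟨w, hw, ha⟩
      have hw : InN Q st w := hw
      cases w with
      | triv x e => simp [Thread.arr] at ha
      | arrows l => exact hw.1.2.1 a (by simpa [Thread.arr] using ha)
    · intro ha
      have := hC a
      simp only [InC, not_and, not_not] at this
      obtain ⟨l, hl, hal⟩ := this ha
      exact ⟨.arrows l, hl, by simpa [Thread.arr] using hal⟩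
  · intro w hw w' hw' hne
    have hw : InN Q st w := by simpa using hw
    have hw' : InN Q st w' := by simpa using hw'
    rw [Function.onFun, Finset.disjoint_left]
    intro a ha ha'
    apply hne
    cases w with
    | triv x e => simp [Thread.arr] at ha
    | arrows l =>
      cases w' with
      | triv x e => simp [Thread.arr] at ha'
      | arrows l' =>
        rw [N_uniq_mem hQ st hw hw' (by simpa [Thread.arr] using ha)
          (by simpa [Thread.arr] using ha')]

theorem eqv_N {st : SigmaTau Q} {w w' : Thread} (h : Relation.EqvGen (PhiRel Q st) w w') :
    InN Q st w ↔ InN Q st w' := by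
  induction h with
  | rel x y h => exact ⟨fun _ => h.2.1, fun _ => h.1⟩
  | refl x => rfl
  | symm x y _ ih => exact ih.symm
  | trans x y z _ _ h1 h2 => exact h1.trans h2

theorem eqv_C {st : SigmaTau Q} {a b : ℕ} (h : Relation.EqvGen (PsiRel Q st) a b) :
    InC Q st a ↔ InC Q st b := by
  induction h with
  | rel x y h => exact ⟨fun _ => h.2.1, fun _ => h.1⟩
  | refl x => rfl
  | symm x y _ ih => exact ih.symm
  | trans x y z _ _ h1 h2 => exact h1.trans h2

theorem NOrbit_subset {st : SigmaTau Q} {O : Set Thread} (h : NOrbit Q st O) :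
    O ⊆ {w | InN Q st w} := by
  obtain ⟨w, hw, rfl⟩ := h
  exact fun w' hw' => (eqv_N hw').1 hw

theorem COrbit_subset {st : SigmaTau Q} {O : Set ℕ} (h : COrbit Q st O) :
    O ⊆ (Q.A : Set ℕ) := by
  obtain ⟨w, hw, rfl⟩ := h
  exact fun w' hw' => ((eqv_C hw').1 hw).1

end Aux

/-- A gentle quiver `𝚫` is of tree type iff
`f_𝚫 = [p+2, p]` for some `p ∈ ℕ`. -/
theorem stmt1 (Q : QuivRel) (hQ : IsGentle Q) (st : SigmaTau Q) :
    TreeType Q ↔ ∃ p : ℕ, ∀ x, fInv Q st x = charFn (p + 2) p x := by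
  have hcard := N_card hQ st
  have hfin := N_finite hQ st
  constructor
  · intro ht
    have hC := tree_C_empty hQ st ht
    have hlen := N_len hQ st hC
    have ht' : Q.V.card = Q.A.card + 1 := ht
    have hpN : pN {w | InN Q st w} = Q.A.card + 2 := by unfold pN; omega
    obtain ⟨w0, hw0⟩ : {w | InN Q st w}.Nonempty := by
      apply Set.nonempty_of_ncard_ne_zero; omega
    have hO : ∀ O, NOrbit Q st O ↔ O = {w | InN Q st w} := by
      intro O
      constructor
      · intro h
        apply Set.Subset.antisymm (NOrbit_subset h)
        obtain ⟨w, hw, rfl⟩ := h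
        exact fun w' hw' => tree_one_orbit hQ st ht hw hw'
      · rintro rfl
        refine ⟨w0, hw0, ?_⟩
        ext w'
        exact ⟨fun hw' => tree_one_orbit hQ st ht hw0 hw', fun h => (eqv_N h).1 hw0⟩
    refine ⟨Q.A.card, fun x => ?_⟩
    obtain ⟨p, q⟩ := x
    have hc : {O : Set ℕ | COrbit Q st O ∧ p = 0 ∧ O.ncard = q} = ∅ := by
      ext O
      simp only [Set.mem_empty_iff_false, iff_false]
      rintro ⟨⟨a, ha, -⟩, -⟩
      exact hC a ha
    simp only [fInv, hc, Set.ncard_empty, add_zero, charFn, Prod.mk.injEq]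
    split_ifs with h
    · obtain ⟨rfl, rfl⟩ := h
      rw [Set.ncard_eq_one]
      refine ⟨{w | InN Q st w}, ?_⟩
      ext O
      simp only [Set.mem_singleton_iff]
      constructor
      · rintro ⟨h, -⟩; exact (hO O).1 h
      · rintro rfl; exact ⟨(hO _).2 rfl, hpN, hlen⟩
    · have : {O : Set Thread | NOrbit Q st O ∧ pN O = p ∧ qN O = q} = ∅ := by
        ext O
        simp only [Set.mem_empty_iff_false, iff_false]
        rintro ⟨h1, h2, h3⟩
        rw [(hO O).1 h1] at h2 h3
        exact h ⟨h2.symm.trans hpN, h3.symm.trans hlen⟩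
      rw [this, Set.ncard_empty]
  · rintro ⟨p, hp⟩
    have hC : ∀ a, ¬ InC Q st a := by
      intro a ha
      have h := hp (0, {b | Relation.EqvGen (PsiRel Q st) a b}.ncard)
      simp only [fInv, charFn, Prod.mk.injEq] at h
      rw [if_neg (by omega)] at h
      have h2 := (Nat.add_eq_zero_iff.1 h).2
      rw [Set.ncard_eq_zero (Q.A.finite_toSet.finite_subsets.subset
        fun O hO => COrbit_subset hO.1)] at h2
      exact Set.eq_empty_iff_forall_notMem.1 h2 {b | Relation.EqvGen (PsiRel Q st) a b}
        ⟨⟨a, ha, rfl⟩, trivial, rfl⟩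
    have hlen := N_len hQ st hC
    have hfO : ∀ x : ℕ × ℕ, {O | NOrbit Q st O ∧ pN O = x.1 ∧ qN O = x.2}.Finite := fun x =>
      hfin.finite_subsets.subset fun O hO => NOrbit_subset hO.1
    have h1 : {O | NOrbit Q st O ∧ pN O = p + 2 ∧ qN O = p}.ncard = 1 := by
      have h := hp (p + 2, p)
      have hc : {O : Set ℕ | COrbit Q st O ∧ p + 2 = 0 ∧ O.ncard = p} = ∅ := by
        ext O
        simp
      simpa [fInv, hc, charFn] using h
    obtain ⟨O, hO⟩ := Set.ncard_eq_one.1 h1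
    have hOm : NOrbit Q st O ∧ pN O = p + 2 ∧ qN O = p := by
      have : O ∈ {O | NOrbit Q st O ∧ pN O = p + 2 ∧ qN O = p} := by rw [hO]; rfl
      exact this
    have hall : ∀ O', NOrbit Q st O' → O' = O := by
      intro O' h'
      have h := hp (pN O', qN O')
      have hne : {O | NOrbit Q st O ∧ pN O = pN O' ∧ qN O = qN O'}.ncard ≠ 0 := by
        intro h0
        rw [Set.ncard_eq_zero (hfO (pN O', qN O'))] at h0
        exact Set.eq_empty_iff_forall_notMem.1 h0 O' ⟨h', rfl, rfl⟩
      simp only [fInv, charFn, Prod.mk.injEq] at h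
      split_ifs at h with hh
      · have : O' ∈ {O | NOrbit Q st O ∧ pN O = p + 2 ∧ qN O = p} := ⟨h', hh.1, hh.2⟩
        rw [hO] at this
        exact this
      · omega
    have hN : O = {w | InN Q st w} := by
      apply Set.Subset.antisymm (NOrbit_subset hOm.1)
      intro w hw
      rw [← hall _ ⟨w, hw, rfl⟩]
      exact Relation.EqvGen.refl w
    rw [hN] at hOm
    have e1 := hOm.2.1
    have e2 := hOm.2.2
    unfold pN at e1
    unfold TreeType
    omega

end GentleQuiv
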